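/- arXiv:2508.18461 — 2 statements merged into one kernel-verified Lean document; each statement's English description precedes it below -/
import Mathlib

section
/- Let C be a strong divisibility sequence, let p be an ideal prime for C with parameter s = s(p), and write α = α(p). Let n = α·n' + r, m_1 = α·m_1' + r_1, m_2 = α·m_2' + r_2 with n', m_1', m_2' ≥ 0, 0 ≤ r, r_1, r_2 < α, m_1 + m_2 = n, and suppose r_1 + r_2 = r + α. Then ν_p(binom(n, m_1)_C) = s + ν_p(n' · binom(n'−1, m_1')), where binom(n'−1, m_1') is the ordinary binomial coefficient. -/
open Finset

/-- A strong divisibility sequence: nonzero integers `Cs 1, Cs 2, ...` with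
`gcd (Cs n) (Cs m) = |Cs (gcd n m)|`. -/
def IsStrongDivSeq (Cs : ℕ → ℤ) : Prop :=
  (∀ n, 1 ≤ n → Cs n ≠ 0) ∧
  ∀ m n, 1 ≤ m → 1 ≤ n → Int.gcd (Cs n) (Cs m) = (Cs (Nat.gcd n m)).natAbs

/-- `a` is the rank of apparition of `m` in the sequence `Cs`:
the least index `j ≥ 1` such that `m ∣ Cs j`. -/
def IsRank (Cs : ℕ → ℤ) (m a : ℕ) : Prop :=
  1 ≤ a ∧ (m : ℤ) ∣ Cs a ∧ ∀ j, 1 ≤ j → (m : ℤ) ∣ Cs j → a ≤ j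

/-- The `C`-orial: `0!_C = 1`, `n!_C = Cs 1 * Cs 2 * ⋯ * Cs n`. -/
def Corial (Cs : ℕ → ℤ) : ℕ → ℤ
  | 0 => 1
  | n + 1 => Corial Cs n * Cs (n + 1)

/-- `p` is an ideal prime for `Cs`, with `α k` the rank of apparition of `p ^ k`
and parameter `s = s(p)`. -/
def IdealPrime (Cs : ℕ → ℤ) (p : ℕ) (α : ℕ → ℕ) (s : ℕ) : Prop :=
  1 ≤ s ∧ (∀ k, 1 ≤ k → IsRank Cs (p ^ k) (α k)) ∧
  (∀ k, 1 ≤ k → k ≤ s → α k = α 1) ∧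
  (∀ k, s < k → α k = p ^ (k - s) * α 1)

/-- The `p`-adic valuation of the `C`-nomial coefficient `binom(n, m)_C`,
defined as `ν_p(n!_C) - ν_p(m!_C) - ν_p((n-m)!_C)` (an integer). -/
def nuCnomial (p : ℕ) (Cs : ℕ → ℤ) (n m : ℕ) : ℤ :=
  (padicValInt p (Corial Cs n) : ℤ) - (padicValInt p (Corial Cs m) : ℤ)
    - (padicValInt p (Corial Cs (n - m)) : ℤ)


lemma pow_dvd_iff_rank (Cs : ℕ → ℤ) (hC : IsStrongDivSeq Cs) (m a : ℕ) (h : IsRank Cs m a)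
    (n : ℕ) (hn : 1 ≤ n) : (m : ℤ) ∣ Cs n ↔ a ∣ n := by
  obtain ⟨ha, hd, hmin⟩ := h
  have hg := hC.2 a n ha hn
  constructor
  · intro hm
    have h1 : (m : ℤ) ∣ (Int.gcd (Cs n) (Cs a) : ℤ) := Int.dvd_coe_gcd hm hd
    rw [hg, Int.dvd_natAbs] at h1
    have h2 := hmin _ (Nat.gcd_pos_of_pos_left _ hn) h1
    have h3 : Nat.gcd n a = a := le_antisymm (Nat.gcd_le_right _ ha) h2
    rw [← h3]
    exact Nat.gcd_dvd_left _ _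
  · intro hdn
    rw [Nat.gcd_eq_right hdn] at hg
    have h1 : (Int.gcd (Cs n) (Cs a) : ℤ) ∣ Cs n := Int.gcd_dvd_left _ _
    rw [hg, Int.natAbs_dvd] at h1
    exact hd.trans h1

lemma val_mul (Cs : ℕ → ℤ) (p : ℕ) (hp : p.Prime) (α : ℕ → ℕ) (s : ℕ)
    (hC : IsStrongDivSeq Cs) (hid : IdealPrime Cs p α s) (q : ℕ) (hq : 1 ≤ q) :
    padicValInt p (Cs (α 1 * q)) = s + padicValNat p q := by
  have := Fact.mk hp
  obtain ⟨hs, hrk, hle, hgt⟩ := hid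
  have ha : 1 ≤ α 1 := (hrk 1 le_rfl).1
  have hn : 1 ≤ α 1 * q := Nat.mul_pos ha hq
  have h0 := hC.1 _ hn
  have key : ∀ k, k ≤ padicValInt p (Cs (α 1 * q)) ↔ k ≤ s + padicValNat p q := by
    intro k
    rcases Nat.eq_zero_or_pos k with rfl | hk
    · simp
    have e1 := padicValInt_dvd_iff (p := p) k (Cs (α 1 * q))
    have e2 := pow_dvd_iff_rank Cs hC _ _ (hrk k hk) _ hn
    push_cast at e2
    rw [e2] at e1
    simp only [h0, false_or] at e1
    rw [← e1]
    rcases le_or_gt k s with h | h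
    · rw [hle k hk h]
      simp; omega
    · rw [hgt k h, mul_comm, Nat.mul_dvd_mul_iff_left ha, padicValNat_dvd_iff]
      omega
  exact le_antisymm ((key _).1 le_rfl) ((key _).2 le_rfl)

lemma Corial_ne (Cs : ℕ → ℤ) (hC : IsStrongDivSeq Cs) (n : ℕ) : Corial Cs n ≠ 0 := by
  induction n with
  | zero => simp [Corial]
  | succ n ih => exact mul_ne_zero ih (hC.1 _ (by omega))

lemma val_Corial (Cs : ℕ → ℤ) (p : ℕ) (hp : p.Prime) (α : ℕ → ℕ) (s : ℕ)
    (hC : IsStrongDivSeq Cs) (hid : IdealPrime Cs p α s) (n : ℕ) :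
    padicValInt p (Corial Cs n)
      = s * (n / α 1) + padicValNat p (Nat.factorial (n / α 1)) := by
  have := Fact.mk hp
  have hr1 := hid.2.1 1 le_rfl
  induction n with
  | zero => simp [Corial]
  | succ n ih =>
    have hC1 := hC.1 (n + 1) (by omega)
    rw [Corial, padicValInt.mul (Corial_ne Cs hC n) hC1, ih, Nat.succ_div]
    split_ifs with h
    · obtain ⟨q, hq⟩ := h
      have hq1 : 1 ≤ q := by
        rcases Nat.eq_zero_or_pos q with rfl | h
        · simp at hq
        · exact h
      have hdiv : n / α 1 + 1 = q := by
        have := Nat.succ_div (a := n) (b := α 1)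
        rw [if_pos ⟨q, hq⟩, hq, Nat.mul_div_cancel_left _ hr1.1] at this
        exact this.symm
      rw [Nat.factorial_succ, padicValNat.mul (by omega) (Nat.factorial_ne_zero _), hq,
        val_mul Cs p hp α s hC hid q hq1, hdiv, ← hdiv]
      ring
    · have : padicValInt p (Cs (n + 1)) = 0 := by
        have h2 := pow_dvd_iff_rank Cs hC _ _ hr1 (n + 1) (by omega)
        rw [pow_one] at h2
        exact padicValInt.eq_zero_of_not_dvd (fun hh => h (h2.1 hh))
      rw [this]
      simp

theorem stmt9 (Cs : ℕ → ℤ) (p : ℕ) (hp : p.Prime) (α : ℕ → ℕ) (s : ℕ)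
    (hC : IsStrongDivSeq Cs) (hid : IdealPrime Cs p α s)
    (n n' r m1 m1' r1 m2 m2' r2 : ℕ)
    (hn : n = α 1 * n' + r) (hm1 : m1 = α 1 * m1' + r1) (hm2 : m2 = α 1 * m2' + r2)
    (hr : r < α 1) (hr1 : r1 < α 1) (hr2 : r2 < α 1) (hsum : m1 + m2 = n)
    (hr12 : r1 + r2 = r + α 1) :
    nuCnomial p Cs n m1 =
      (s : ℤ) + (padicValNat p (n' * Nat.choose (n' - 1) m1') : ℤ) := by
  have := Fact.mk hp
  have ha : 0 < α 1 := (hid.2.1 1 le_rfl).1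
  have hn' : n' = m1' + m2' + 1 := by
    apply Nat.eq_of_mul_eq_mul_left ha
    have : α 1 * (m1' + m2' + 1) = α 1 * m1' + α 1 * m2' + α 1 := by ring
    omega
  have d0 : n / α 1 = n' := by
    rw [hn, Nat.mul_add_div ha, Nat.div_eq_of_lt hr, add_zero]
  have d1 : m1 / α 1 = m1' := by
    rw [hm1, Nat.mul_add_div ha, Nat.div_eq_of_lt hr1, add_zero]
  have d2 : (n - m1) / α 1 = m2' := by
    rw [← hsum, Nat.add_sub_cancel_left, hm2, Nat.mul_add_div ha, Nat.div_eq_of_lt hr2, add_zero]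
  have hf : Nat.factorial n' =
      (n' * Nat.choose (n' - 1) m1') * Nat.factorial m1' * Nat.factorial m2' := by
    have := Nat.add_choose_mul_factorial_mul_factorial m1' m2'
    rw [Nat.choose_symm_add.symm] at this
    rw [hn', Nat.factorial_succ, ← this, Nat.add_sub_cancel]
    ring
  have hne : n' * Nat.choose (n' - 1) m1' ≠ 0 :=
    mul_ne_zero (by omega) (Nat.choose_pos (by omega)).ne'
  unfold nuCnomial
  rw [val_Corial Cs p hp α s hC hid, val_Corial Cs p hp α s hC hid,
    val_Corial Cs p hp α s hC hid, d0, d1, d2, hf,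
    padicValNat.mul (mul_ne_zero hne (Nat.factorial_ne_zero _)) (Nat.factorial_ne_zero _),
    padicValNat.mul hne (Nat.factorial_ne_zero _)]
  generalize padicValNat p (n' * Nat.choose (n' - 1) m1') = v
  rw [hn']
  push_cast
  ring
end

section
/- Let C be a strong divisibility sequence, let p be an acceptable prime for C with parameter s = s(p), and let k ≥ 2. Let n = α(p^s)·n' + r with 0 ≤ r < α(p^s), and let (m_1, …, m_k) be nonnegative integers with m_1 + ⋯ + m_k = n; write m_i = α(p^s)·m_i' + r_i with 0 ≤ r_i < α(p^s), set r⃗ = (r_1,…,r_k), and set λ = n' − (m_1' + ⋯ + m_k'). Then ν_p(binom(n; m_1,…,m_k)_C) = f_{p,k,C,λ}(r, r⃗) + ν_p(n'!) − Σ_{i=1}^k ν_p(m_i'!). -/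
open Finset

/-- `p` is an acceptable prime for `Cs`, with `α k` the rank of apparition of `p ^ k`
and parameter `s = s(p)`. -/
def AcceptablePrime (Cs : ℕ → ℤ) (p : ℕ) (α : ℕ → ℕ) (s : ℕ) : Prop :=
  1 ≤ s ∧ (∀ k, 1 ≤ k → IsRank Cs (p ^ k) (α k)) ∧
  (∀ k, s < k → α k = p ^ (k - s) * α s)

/-- The `p`-adic valuation of the `C`-multinomial coefficient,
defined as `ν_p(n!_C) - ∑_i ν_p(m_i!_C)` (an integer). -/
def nuCmulti (p : ℕ) (Cs : ℕ → ℤ) {k : ℕ} (n : ℕ) (m : Fin k → ℕ) : ℤ :=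
  (padicValInt p (Corial Cs n) : ℤ) - ∑ i, (padicValInt p (Corial Cs (m i)) : ℤ)

/-- `T_{p,k,C}(n, x)`: the generating polynomial counting `C`-multinomial coefficients
with `k` parts and top index `n` by their `p`-adic valuations. -/
noncomputable def TmultiC (p k : ℕ) (Cs : ℕ → ℤ) (n : ℕ) : Polynomial ℤ :=
  ∑ m ∈ Finset.Nat.antidiagonalTuple k n, Polynomial.X ^ (nuCmulti p Cs n m).toNat

/-- `T_{p,k}(n, x)`: the generating polynomial counting ordinary multinomial coefficients
with `k` parts and top index `n` by their `p`-adic valuations. -/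
noncomputable def TmultiOrd (p k n : ℕ) : Polynomial ℤ :=
  ∑ m ∈ Finset.Nat.antidiagonalTuple k n,
    Polynomial.X ^ (padicValNat p (Nat.multinomial Finset.univ m))

/-- `T_{p,k,λ}(n, x)`: `0` if `n < λ`, and
`x^(ν_p(n!/(n-λ)!) + λ) · T_{p,k}(n - λ, x)` otherwise. -/
noncomputable def TmultiLam (p k lam n : ℕ) : Polynomial ℤ :=
  if n < lam then 0
  else Polynomial.X ^ ((padicValNat p (Nat.factorial n)
      - padicValNat p (Nat.factorial (n - lam))) + lam) * TmultiOrd p k (n - lam)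

/-- `f_{p,k,C,λ}(r, r⃗)` from the acceptable-prime initial vector. -/
def fCmulti (α : ℕ → ℕ) (s : ℕ) {k : ℕ} (lam r : ℕ) (rv : Fin k → ℕ) : ℤ :=
  (lam : ℤ) * ∑ j ∈ Finset.Icc 1 s, ((α s / α j : ℕ) : ℤ)
  + ∑ j ∈ Finset.Icc 1 s,
      (((r / α j : ℕ) : ℤ) - ∑ i, ((rv i / α j : ℕ) : ℤ))

theorem rank_dvd_iff {Cs : ℕ → ℤ} (hC : IsStrongDivSeq Cs) {m a : ℕ} (h : IsRank Cs m a)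
    {t : ℕ} (ht : 1 ≤ t) : (m : ℤ) ∣ Cs t ↔ a ∣ t := by
  obtain ⟨ha, hd, hmin⟩ := h
  have hg := hC.2 a t ha ht
  constructor
  · intro hm
    have h1 : (m : ℤ) ∣ Cs (Nat.gcd t a) := by
      rw [← Int.dvd_natAbs, ← hg]
      exact Int.dvd_coe_gcd hm hd
    have h2 := hmin _ (Nat.gcd_pos_of_pos_left _ ht) h1
    have h3 : Nat.gcd t a = a :=
      le_antisymm (Nat.le_of_dvd ha (Nat.gcd_dvd_right t a)) h2
    rw [← h3]
    exact Nat.gcd_dvd_left t a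
  · intro hat
    rw [Nat.gcd_eq_right hat] at hg
    have h1 : Cs a ∣ Cs t := by
      rw [← Int.natAbs_dvd, ← hg]
      exact Int.gcd_dvd_left _ _
    exact hd.trans h1

theorem le_val_iff {Cs : ℕ → ℤ} {p : ℕ} (hp : p.Prime) {α : ℕ → ℕ} {s : ℕ}
    (hC : IsStrongDivSeq Cs) (hacc : AcceptablePrime Cs p α s) {j t : ℕ} (hj : 1 ≤ j)
    (ht : 1 ≤ t) : j ≤ padicValInt p (Cs t) ↔ α j ∣ t := by
  have := Fact.mk hp
  rw [← rank_dvd_iff hC (hacc.2.1 j hj) ht]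
  push_cast
  rw [padicValInt_dvd_iff]
  simp [hC.1 t ht]

theorem val_term {Cs : ℕ → ℤ} {p : ℕ} (hp : p.Prime) {α : ℕ → ℕ} {s : ℕ}
    (hC : IsStrongDivSeq Cs) (hacc : AcceptablePrime Cs p α s) {t : ℕ} (ht : 1 ≤ t) :
    padicValInt p (Cs t) = (∑ j ∈ Finset.Icc 1 s, if α j ∣ t then 1 else 0)
      + if α s ∣ t then padicValNat p (t / α s) else 0 := by
  have := Fact.mk hp
  have key : ∀ j, 1 ≤ j → (j ≤ padicValInt p (Cs t) ↔ α j ∣ t) :=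
    fun j hj => le_val_iff hp hC hacc hj ht
  set v := padicValInt p (Cs t) with hv
  have hs := hacc.1
  have hsum : (∑ j ∈ Finset.Icc 1 s, if α j ∣ t then 1 else 0) = min s v := by
    rw [← Finset.sum_filter, ← Finset.card_eq_sum_ones]
    have : (Finset.Icc 1 s).filter (fun j => α j ∣ t) = Finset.Icc 1 (min s v) := by
      ext j
      simp only [Finset.mem_filter, Finset.mem_Icc, le_min_iff]
      constructor
      · rintro ⟨⟨h1, h2⟩, h3⟩
        exact ⟨h1, h2, (key j h1).2 h3⟩
      · rintro ⟨h1, h2, h3⟩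
        exact ⟨⟨h1, h2⟩, (key j h1).1 h3⟩
    rw [this]; simp
  rw [hsum]
  have hpos : 0 < α s := (hacc.2.1 s hs).1
  split_ifs with h
  · have hsv : s ≤ v := (key s hs).2 h
    obtain ⟨u, rfl⟩ := h
    rw [Nat.mul_div_cancel_left _ hpos]
    have hu : u ≠ 0 := by rintro rfl; simp at ht
    have h2 : ∀ e, s + e ≤ v ↔ e ≤ padicValNat p u := by
      intro e
      rw [key (s + e) (by omega), ← padicValNat_dvd_iff_le hu]
      rcases Nat.eq_zero_or_pos e with rfl | he
      · simp
      · rw [hacc.2.2 (s + e) (by omega), Nat.add_sub_cancel_left, mul_comm (p ^ e)]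
        exact Nat.mul_dvd_mul_iff_left hpos
    have h3 := (h2 (padicValNat p u)).2 le_rfl
    have h4 := (h2 (v - s)).1 (by omega)
    omega
  · have : ¬ s ≤ v := fun h' => h ((key s hs).1 h')
    omega

theorem corial_ne_zero {Cs : ℕ → ℤ} (hC : IsStrongDivSeq Cs) (n : ℕ) : Corial Cs n ≠ 0 := by
  induction n with
  | zero => simp [Corial]
  | succ n ih => exact mul_ne_zero ih (hC.1 _ (by omega))

theorem val_corial {Cs : ℕ → ℤ} {p : ℕ} (hp : p.Prime) {α : ℕ → ℕ} {s : ℕ}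
    (hC : IsStrongDivSeq Cs) (hacc : AcceptablePrime Cs p α s) (n : ℕ) :
    padicValInt p (Corial Cs n) = (∑ j ∈ Finset.Icc 1 s, n / α j)
      + padicValNat p (Nat.factorial (n / α s)) := by
  have := Fact.mk hp
  induction n with
  | zero => simp [Corial]
  | succ n ih =>
    have h1 : padicValInt p (Corial Cs (n + 1)) =
        padicValInt p (Corial Cs n) + padicValInt p (Cs (n + 1)) := by
      rw [Corial, padicValInt.mul (corial_ne_zero hC n) (hC.1 _ (by omega))]
    rw [h1, ih, val_term hp hC hacc (by omega : 1 ≤ n + 1)]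
    simp only [Nat.succ_div, Finset.sum_add_distrib]
    split_ifs with h
    · rw [Nat.factorial_succ, padicValNat.mul (Nat.succ_ne_zero _) (Nat.factorial_ne_zero _)]
      simp only [Nat.succ_eq_add_one]
      omega
    · simp only [add_zero]
      omega

theorem val_corial_split {Cs : ℕ → ℤ} {p : ℕ} (hp : p.Prime) {α : ℕ → ℕ} {s : ℕ}
    (hC : IsStrongDivSeq Cs) (hacc : AcceptablePrime Cs p α s) (q r : ℕ) (hr : r < α s) :
    padicValInt p (Corial Cs (α s * q + r)) = q * (∑ j ∈ Finset.Icc 1 s, α s / α j)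
      + (∑ j ∈ Finset.Icc 1 s, r / α j) + padicValNat p (Nat.factorial q) := by
  have hs := hacc.1
  have hpos : 0 < α s := (hacc.2.1 s hs).1
  have hq : (α s * q + r) / α s = q := by
    rw [Nat.mul_add_div hpos, Nat.div_eq_of_lt hr, add_zero]
  rw [val_corial hp hC hacc, hq, Finset.mul_sum, ← Finset.sum_add_distrib]
  congr 1
  apply Finset.sum_congr rfl
  intro j hj
  obtain ⟨hj1, hj2⟩ := Finset.mem_Icc.1 hj
  have hd : α j ∣ α s := (le_val_iff hp hC hacc hj1 hpos).1
    (hj2.trans ((le_val_iff hp hC hacc hs hpos).2 dvd_rfl))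
  have hjpos : 0 < α j := (hacc.2.1 j hj1).1
  obtain ⟨c, hc⟩ := hd
  rw [hc, Nat.mul_div_cancel_left _ hjpos, mul_assoc, Nat.mul_add_div hjpos, mul_comm c]

theorem stmt14 (Cs : ℕ → ℤ) (p : ℕ) (hp : p.Prime) (α : ℕ → ℕ) (s : ℕ)
    (hC : IsStrongDivSeq Cs) (hacc : AcceptablePrime Cs p α s)
    (k : ℕ) (hk : 2 ≤ k) (n n' r lam : ℕ) (m m' rv : Fin k → ℕ)
    (hn : n = α s * n' + r) (hr : r < α s)
    (hm : ∀ i, m i = α s * m' i + rv i) (hri : ∀ i, rv i < α s)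
    (hsum : ∑ i, m i = n)
    (hlam : (lam : ℤ) = (n' : ℤ) - ∑ i, (m' i : ℤ)) :
    nuCmulti p Cs n m =
      fCmulti α s lam r rv + (padicValNat p (Nat.factorial n') : ℤ)
        - ∑ i, (padicValNat p (Nat.factorial (m' i)) : ℤ) := by
  simp only [nuCmulti, fCmulti, hn, hm]
  rw [val_corial_split hp hC hacc _ _ hr]
  simp only [fun i => val_corial_split hp hC hacc (m' i) (rv i) (hri i)]
  push_cast
  rw [hlam]
  simp only [Finset.sum_add_distrib, Finset.sum_sub_distrib, ← Finset.sum_mul]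
  rw [Finset.sum_comm (s := Finset.Icc 1 s)]
  ring
end
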